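/- For every ε > 0 there are arbitrarily large n for which some index word σ ∈ {0,…,m−1}^n satisfies ρ(A_{σ_{n−1}}⋯A_{σ_1}A_{σ_0}) ≥ (ρ(𝒜) − ε)^n; consequently, in any norm, ‖A_{σ_{n−1}}⋯A_{σ_1}A_{σ_0}‖ ≥ (ρ(𝒜) − ε)^n for those n and σ. -/

import Mathlib

/-! The result is the lower bound of the Berger–Wang theorem, proved through traces.

Put `r = ρ(𝒜) - ε`. For `r ≤ 0` a word of odd length works, so let `r > 0` and suppose that all words
`w` of length `n ≥ N₀` had spectral radius below `r ^ n`. Then `|tr w| ≤ d * r ^ n` (`abs_trace_le`).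
Let `𝓐` be the unital algebra generated by the matrices; it is spanned by the words. The radical of
the trace form of `𝓐` consists of nilpotent elements, as a nonzero idempotent has nonzero trace, and
is therefore contained in the Jacobson radical `J` (`mem_jacobson_of_functional`). Hence, for words
`wᵢ` forming a basis of `𝓐`, the traces of the words `w * wᵢ` control the class of `w` modulo `J`,
which is `O(r ^ n)` (`exists_section`). Since `J` is nilpotent, the words themselves are `O(r' ^ n)`
for every `r' > r` (`growth`), and so `ρ(𝒜) ≤ r'` for every `r' > r` (`jsr_le`), contradicting
`r < ρ(𝒜)`.

The statement about norms follows because the spectral radius is at most any induced operator norm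
(`IsNorm.specRad_le_opNorm`). -/

open Filter Topology

/-- `N` is a norm on `ℝ^d`. -/
structure IsNorm (d : ℕ) (N : (Fin d → ℝ) → ℝ) : Prop where
  eq_zero_iff : ∀ x, N x = 0 ↔ x = 0
  add_le : ∀ x y, N (x + y) ≤ N x + N y
  smul_eq : ∀ (a : ℝ) (x), N (a • x) = |a| * N x

/-- The operator norm of the matrix `B` induced by the norm `N` on `ℝ^d`. -/
noncomputable def opNorm {d : ℕ} (N : (Fin d → ℝ) → ℝ)
    (B : Matrix (Fin d) (Fin d) ℝ) : ℝ :=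
  ⨆ x : {x : Fin d → ℝ // x ≠ 0}, N (B.mulVec x.1) / N x.1

/-- The product `A_{σ_{n-1}} ⋯ A_{σ_1} A_{σ_0}`. -/
noncomputable def word {d m : ℕ} (A : Fin m → Matrix (Fin d) (Fin d) ℝ)
    (n : ℕ) (σ : Fin n → Fin m) : Matrix (Fin d) (Fin d) ℝ :=
  (List.ofFn fun i => A (σ i)).reverse.prod

/-- `ρ_n(𝒜) = max_σ ‖A_σ‖^{1/n}` with respect to the norm `N`. -/
noncomputable def rhoN {d m : ℕ} (N : (Fin d → ℝ) → ℝ)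
    (A : Fin m → Matrix (Fin d) (Fin d) ℝ) (n : ℕ) : ℝ :=
  ⨆ σ : Fin n → Fin m, opNorm N (word A n σ) ^ ((n : ℝ)⁻¹)

/-- The joint spectral radius `ρ(𝒜) = limsup_{n→∞} ρ_n(𝒜)`. -/
noncomputable def jsr {d m : ℕ} (N : (Fin d → ℝ) → ℝ)
    (A : Fin m → Matrix (Fin d) (Fin d) ℝ) : ℝ :=
  Filter.limsup (rhoN N A) Filter.atTop

/-- The spectral radius of a real square matrix: the maximum modulus of its
complex eigenvalues. -/
noncomputable def specRad {d : ℕ} (B : Matrix (Fin d) (Fin d) ℝ) : ℝ :=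
  sSup ((fun μ => ‖μ‖) '' spectrum ℂ (B.map (fun t => (t : ℂ))))

/-! ### Words in a finite-dimensional algebra with a trace -/

section Algebra

variable {𝓐 : Type*}

/-- If `τ` does not vanish on nonzero idempotents, then an element `b` with `τ (b * c) = 0` for
all `c` is nilpotent. Writing the minimal polynomial of `b` as `X ^ a * g` with `g` prime to `X`,
Bézout for `X ^ (a + 1)` and `g` produces an idempotent polynomial multiple of `b`; `τ` kills it, so
it is zero, and then `b ^ a = 0`. -/
theorem isNilpotent_of_functional [Ring 𝓐] [Algebra ℝ 𝓐] [FiniteDimensional ℝ 𝓐]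
    (τ : 𝓐 →ₗ[ℝ] ℝ) (hidem : ∀ e : 𝓐, IsIdempotentElem e → τ e = 0 → e = 0)
    (b : 𝓐) (hb : ∀ c, τ (b * c) = 0) : IsNilpotent b := by
  have hint : IsIntegral ℝ b := IsIntegral.of_finite ℝ b
  have hne := minpoly.ne_zero hint
  obtain ⟨g, hg, hndvd⟩ :=
    (minpoly ℝ b).exists_eq_pow_rootMultiplicity_mul_and_not_dvd hne 0
  rw [Polynomial.C_0, sub_zero] at hg hndvd
  set a := (minpoly ℝ b).rootMultiplicity 0
  have hcop : IsCoprime ((Polynomial.X : Polynomial ℝ) ^ (a + 1)) g :=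
    IsCoprime.pow_left ((Polynomial.irreducible_X.coprime_iff_not_dvd).2 hndvd)
  obtain ⟨u, v, huv⟩ := hcop
  have h0 : b ^ a * Polynomial.aeval b g = 0 := by
    have := minpoly.aeval ℝ b
    rw [hg] at this
    simpa using this
  have h1 : Polynomial.aeval b u * b ^ (a + 1) + Polynomial.aeval b v * Polynomial.aeval b g
      = 1 := by
    have := congrArg (Polynomial.aeval b) huv
    simpa using this
  set U := Polynomial.aeval b u
  set V := Polynomial.aeval b v
  set G := Polynomial.aeval b g
  have hVb : Commute V b := by
    simpa using (Commute.all v Polynomial.X).map (Polynomial.aeval b)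
  have hUb : Commute U b := by
    simpa using (Commute.all u Polynomial.X).map (Polynomial.aeval b)
  have hkill : b ^ a * (V * G) = 0 := by
    rw [← mul_assoc, ← (hVb.pow_right a).eq, mul_assoc, h0, mul_zero]
  have hkill' : b ^ (a + 1) * (V * G) = 0 := by
    rw [pow_succ', mul_assoc, hkill, mul_zero]
  have he : IsIdempotentElem (U * b ^ (a + 1)) := by
    have h2 : U * b ^ (a + 1) * (V * G) = 0 := by rw [mul_assoc, hkill', mul_zero]
    have h3 : V * G = 1 - U * b ^ (a + 1) := by rw [← h1]; abel
    rw [h3, mul_sub, mul_one, sub_eq_zero] at h2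
    exact h2.symm
  have hτ : τ (U * b ^ (a + 1)) = 0 := by
    rw [(hUb.pow_right (a + 1)).eq, pow_succ', mul_assoc]
    exact hb _
  have he0 := hidem _ he hτ
  refine ⟨a, ?_⟩
  rw [he0, zero_add] at h1
  rwa [h1, mul_one] at hkill

/-- The radical of the bilinear form `(x, y) ↦ τ (x * y)` is a nil left ideal, hence lies in the
Jacobson radical. -/
theorem mem_jacobson_of_functional [Ring 𝓐] [Algebra ℝ 𝓐] [FiniteDimensional ℝ 𝓐]
    (τ : 𝓐 →ₗ[ℝ] ℝ) (hcomm : ∀ x y, τ (x * y) = τ (y * x))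
    (hidem : ∀ e : 𝓐, IsIdempotentElem e → τ e = 0 → e = 0)
    (b : 𝓐) (hb : ∀ c, τ (b * c) = 0) : b ∈ Ideal.jacobson (⊥ : Ideal 𝓐) := by
  rw [Ideal.mem_jacobson_iff]
  intro y
  have hyb : IsNilpotent (y * b) := by
    refine isNilpotent_of_functional τ hidem _ fun c => ?_
    rw [mul_assoc, hcomm, mul_assoc]
    exact hb _
  obtain ⟨z, hz⟩ := hyb.isUnit_add_one.exists_left_inv
  refine ⟨z, ?_⟩
  rw [Ideal.mem_bot, sub_eq_zero, ← hz]
  noncomm_ring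

/-- A bound on the traces of long words bounds their classes modulo the Jacobson radical, stated
here through representatives `k`: if the words `wᵢ` form a basis of the algebra, the finitely many
numbers `τ (w * wᵢ)` determine the class of `w`, and each `w * wᵢ` is again a word. -/
theorem exists_section [NormedRing 𝓐] [NormedAlgebra ℝ 𝓐] [FiniteDimensional ℝ 𝓐] {m : ℕ}
    (a : Fin m → 𝓐)
    (hspan : Submodule.span ℝ (Set.range fun l : List (Fin m) => (l.map a).prod) = ⊤)
    (τ : 𝓐 →ₗ[ℝ] ℝ) (hcomm : ∀ x y, τ (x * y) = τ (y * x))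
    (hidem : ∀ e : 𝓐, IsIdempotentElem e → τ e = 0 → e = 0)
    (r D : ℝ) (hr : 0 < r) (hD : 0 ≤ D) (N₀ : ℕ)
    (hτ : ∀ l : List (Fin m), N₀ ≤ l.length → |τ (l.map a).prod| ≤ D * r ^ l.length) :
    ∃ C : ℝ, 0 ≤ C ∧ ∀ l : List (Fin m), N₀ ≤ l.length → ∃ k : 𝓐, ‖k‖ ≤ C * r ^ l.length ∧
      (l.map a).prod - k ∈ Ideal.jacobson (⊥ : Ideal 𝓐) := by
  obtain ⟨t, htsub, htspan, htind⟩ :=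
    exists_linearIndependent ℝ (Set.range fun l : List (Fin m) => (l.map a).prod)
  rw [hspan] at htspan
  have : Fintype t := htind.setFinite.fintype
  choose L hL using fun i : t => htsub i.2
  let T : 𝓐 →ₗ[ℝ] (t → ℝ) := LinearMap.pi fun i => τ ∘ₗ LinearMap.mulRight ℝ (i : 𝓐)
  have hT : ∀ x i, T x i = τ (x * i) := fun x i => rfl
  obtain ⟨g, hg⟩ := T.rangeRestrict.exists_rightInverse_of_surjective T.range_rangeRestrict
  have hg' : ∀ y, T (g y) = y := fun y => by
    have := LinearMap.congr_fun hg y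
    exact congrArg Subtype.val this
  have hker : ∀ b, T b = 0 → b ∈ Ideal.jacobson (⊥ : Ideal 𝓐) := by
    intro b hb
    refine mem_jacobson_of_functional τ hcomm hidem b fun c => ?_
    have : (τ ∘ₗ LinearMap.mulLeft ℝ b) = 0 := by
      refine LinearMap.ext_on htspan fun x hx => ?_
      exact congrFun hb ⟨x, hx⟩
    exact LinearMap.congr_fun this c
  let g' := LinearMap.toContinuousLinearMap g
  -- The representative of a word is its image under `g ∘ T`, where `g` is a section of `T`.
  refine ⟨‖g'‖ * (D * ∑ i : t, r ^ (L i).length), by positivity, fun l hl => ?_⟩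
  refine ⟨g ⟨T (l.map a).prod, LinearMap.mem_range_self _ _⟩, ?_, hker _ ?_⟩
  · refine (g'.le_opNorm _).trans ?_
    rw [mul_assoc]
    refine mul_le_mul_of_nonneg_left ?_ (norm_nonneg _)
    rw [Submodule.coe_norm, pi_norm_le_iff_of_nonneg (by positivity)]
    intro i
    have h1 : (l.map a).prod * (i : 𝓐) = ((l ++ L i).map a).prod := by
      rw [List.map_append, List.prod_append]; congr 1; exact (hL i).symm
    change ‖T (l.map a).prod i‖ ≤ _
    rw [hT, h1, Real.norm_eq_abs]
    refine (hτ _ (by simp; omega)).trans ?_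
    rw [List.length_append, pow_add, mul_assoc, mul_comm (r ^ l.length)]
    have := Finset.single_le_sum (f := fun i : t => r ^ (L i).length)
      (fun i _ => by positivity) (Finset.mem_univ i)
    gcongr
  · rw [map_sub, hg', sub_self]

/-- Passing to the quotient by the Jacobson radical `J` does not change the exponential growth
rate of words, because `J` is nilpotent. For `x ∈ J ^ j` the norm of `x * w` is estimated by
descending induction on `j`: split off a block of `n` letters from `w` and write it as `k + ν` with
`k` small and `ν ∈ J`; then `x * k` stays in `J ^ j`, while `x * ν` lies in `J ^ (j + 1)`. -/
theorem growth [NormedRing 𝓐] [NormedAlgebra ℝ 𝓐] [FiniteDimensional ℝ 𝓐] {m : ℕ}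
    (a : Fin m → 𝓐) (r C : ℝ) (hr : 0 < r) (N₀ : ℕ)
    (h : ∀ l : List (Fin m), N₀ ≤ l.length → ∃ k : 𝓐, ‖k‖ ≤ C * r ^ l.length ∧
      (l.map a).prod - k ∈ Ideal.jacobson (⊥ : Ideal 𝓐)) (r' : ℝ) (hr' : r < r') :
    ∃ C' : ℝ, 0 ≤ C' ∧ ∀ l : List (Fin m), ‖(l.map a).prod‖ ≤ C' * r' ^ l.length := by
  have hr'0 : 0 < r' := hr.trans hr'
  have : IsArtinianRing 𝓐 := isArtinian_of_tower ℝ inferInstance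
  obtain ⟨p, hp⟩ := IsArtinianRing.isNilpotent_jacobson_bot (R := 𝓐)
  obtain ⟨n, hnN, hn⟩ : ∃ n, max N₀ 1 ≤ n ∧ C * r ^ n ≤ r' ^ n / 2 := by
    have h1 : Tendsto (fun n : ℕ => C * (r / r') ^ n) atTop (𝓝 (C * 0)) :=
      (tendsto_pow_atTop_nhds_zero_of_lt_one (by positivity)
        ((div_lt_one hr'0).2 hr')).const_mul C
    rw [mul_zero] at h1
    obtain ⟨n, hn1, hn2⟩ := ((h1.eventually (ge_mem_nhds (show (0 : ℝ) < 1 / 2 by norm_num))).and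
      (eventually_ge_atTop (max N₀ 1))).exists
    refine ⟨n, hn2, ?_⟩
    rw [div_pow, ← mul_div_assoc, div_le_iff₀ (by positivity)] at hn1
    linarith
  -- There are only finitely many words of length at most `n`.
  obtain ⟨B, hB0, hB⟩ : ∃ B : ℝ, 0 ≤ B ∧
      ∀ l : List (Fin m), l.length ≤ n → ‖(l.map a).prod‖ ≤ B * r' ^ l.length := by
    have hfin : {l : List (Fin m) | l.length ≤ n}.Finite := List.finite_length_le _ n
    obtain ⟨B, hB⟩ := (hfin.image fun l => ‖(l.map a).prod‖ / r' ^ l.length).bddAbove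
    refine ⟨max B 0, le_max_right _ _, fun l hl => ?_⟩
    rw [← div_le_iff₀ (by positivity)]
    exact (hB ⟨l, hl, rfl⟩).trans (le_max_left _ _)
  -- `i = p - j` makes the descending induction on `j` an ascending one.
  have key : ∀ i j, i + j = p → ∃ C' : ℝ, 0 ≤ C' ∧
      ∀ x ∈ (Ideal.jacobson (⊥ : Ideal 𝓐)) ^ j, ∀ l : List (Fin m),
        ‖x * (l.map a).prod‖ ≤ C' * r' ^ l.length * ‖x‖ := by
    intro i
    induction i with
    | zero =>
      intro j hj
      obtain rfl : j = p := by omega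
      refine ⟨0, le_rfl, fun x hx l => ?_⟩
      rw [hp] at hx
      obtain rfl : x = 0 := hx
      simp
    | succ i ih =>
      intro j hj
      obtain ⟨C₁, hC₁, h₁⟩ := ih (j + 1) (by omega)
      set M := B * r' ^ n + r' ^ n / 2 with hM
      have hM0 : 0 ≤ M := by positivity
      -- The block contributes `C' * (r' ^ n / 2)` through `k` and `C₁ * M` through `ν`; the second
      -- is absorbed in the remaining half of `C' * r' ^ n`.
      obtain ⟨C', hC'B, hC'1⟩ : ∃ C', B ≤ C' ∧ C₁ * M ≤ C' * (r' ^ n / 2) :=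
        ⟨max B (C₁ * M / (r' ^ n / 2)), le_max_left _ _,
          by rw [← div_le_iff₀ (by positivity)]; exact le_max_right _ _⟩
      have hC'0 : 0 ≤ C' := hB0.trans hC'B
      refine ⟨C', hC'0, fun x hx l => ?_⟩
      induction hs : l.length using Nat.strong_induction_on generalizing x l with
      | _ s ihs =>
      subst hs
      rcases le_or_gt l.length n with hl | hl
      · refine (norm_mul_le _ _).trans ?_
        rw [mul_comm]
        have := hB l hl
        gcongr
        exact this.trans (by gcongr)
      set u := l.take n with hu
      set v := l.drop n with hv
      have hlu : u.length = n := by rw [hu, List.length_take]; omega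
      have hlv : v.length + n = l.length := by rw [hv, List.length_drop]; omega
      have hsplit : (l.map a).prod = (u.map a).prod * (v.map a).prod := by
        rw [← List.prod_append, ← List.map_append, hu, hv, List.take_append_drop]
      obtain ⟨k, hk, hkJ⟩ := h u (by omega)
      rw [hlu] at hk
      set ν := (u.map a).prod - k with hν
      have hνM : ‖ν‖ ≤ M := by
        refine (norm_sub_le _ _).trans (add_le_add ?_ (hk.trans hn))
        rw [← hlu]; exact hB u hlu.le
      have hxk : x * k ∈ Ideal.jacobson (⊥ : Ideal 𝓐) ^ j := Ideal.mul_mem_right _ _ hx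
      have hxν : x * ν ∈ Ideal.jacobson (⊥ : Ideal 𝓐) ^ (j + 1) := by
        rw [Submodule.pow_succ]; exact Ideal.mul_mem_mul hx hkJ
      have e : x * (l.map a).prod = x * k * (v.map a).prod + x * ν * (v.map a).prod := by
        rw [hsplit, hν]; noncomm_ring
      have b1 := ihs v.length (by omega) (x * k) hxk v rfl
      have b2 := h₁ (x * ν) hxν v
      have n1 : ‖x * k‖ ≤ ‖x‖ * (r' ^ n / 2) :=
        (norm_mul_le _ _).trans (by gcongr; exact hk.trans hn)
      have n2 : ‖x * ν‖ ≤ ‖x‖ * M := (norm_mul_le _ _).trans (by gcongr)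
      calc ‖x * (l.map a).prod‖
          ≤ C' * r' ^ v.length * (‖x‖ * (r' ^ n / 2)) + C₁ * r' ^ v.length * (‖x‖ * M) := by
            rw [e]
            refine (norm_add_le _ _).trans (add_le_add (b1.trans ?_) (b2.trans ?_)) <;> gcongr
        _ = C' * r' ^ v.length * (‖x‖ * (r' ^ n / 2)) + (C₁ * M) * (r' ^ v.length * ‖x‖) := by
            ring
        _ ≤ C' * r' ^ v.length * (‖x‖ * (r' ^ n / 2))
              + (C' * (r' ^ n / 2)) * (r' ^ v.length * ‖x‖) := by gcongr
        _ = C' * r' ^ l.length * ‖x‖ := by rw [← hlv, pow_add]; ring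
  obtain ⟨C', hC', hb⟩ := key p 0 (by omega)
  refine ⟨C' * ‖(1 : 𝓐)‖, by positivity, fun l => ?_⟩
  have := hb 1 (by rw [Submodule.pow_zero, Ideal.one_eq_top]; trivial) l
  rw [one_mul] at this
  linarith

end Algebra

/-! ### Norms, spectral radius and trace -/

section Norms

variable {d : ℕ} {N : (Fin d → ℝ) → ℝ}

theorem IsNorm.neg (hN : IsNorm d N) (x) : N (-x) = N x := by
  have := hN.smul_eq (-1) x
  simpa using this

theorem IsNorm.nonneg (hN : IsNorm d N) (x) : 0 ≤ N x := by
  have h := hN.add_le x (-x)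
  rw [hN.neg, add_neg_cancel, (hN.eq_zero_iff 0).2 rfl] at h
  linarith

theorem IsNorm.pos (hN : IsNorm d N) {x} (hx : x ≠ 0) : 0 < N x :=
  lt_of_le_of_ne (hN.nonneg x) fun h => hx ((hN.eq_zero_iff x).1 h.symm)

theorem IsNorm.continuous (hN : IsNorm d N) : Continuous N := by
  have hc : ConvexOn ℝ Set.univ N := by
    refine ⟨convex_univ, fun x _ y _ a b ha hb _ => ?_⟩
    refine (hN.add_le _ _).trans ?_
    rw [hN.smul_eq, hN.smul_eq, abs_of_nonneg ha, abs_of_nonneg hb, smul_eq_mul, smul_eq_mul]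
  exact continuousOn_univ.1 (hc.continuousOn isOpen_univ)

theorem IsNorm.exists_bounds (hd : 1 ≤ d) (hN : IsNorm d N) :
    ∃ c K : ℝ, 0 < c ∧ 0 < K ∧ ∀ x, c * ‖x‖ ≤ N x ∧ N x ≤ K * ‖x‖ := by
  have : Nonempty (Fin d) := ⟨⟨0, hd⟩⟩
  have hcpt : IsCompact (Metric.sphere (0 : Fin d → ℝ) 1) := isCompact_sphere _ _
  have hne : (Metric.sphere (0 : Fin d → ℝ) 1).Nonempty :=
    NormedSpace.sphere_nonempty.2 zero_le_one
  have hsph : ∀ x ∈ Metric.sphere (0 : Fin d → ℝ) 1, 0 < N x := fun x hx =>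
    hN.pos (by rintro rfl; simp at hx)
  obtain ⟨y, hy, hymin⟩ := hcpt.exists_isMinOn hne hN.continuous.continuousOn
  obtain ⟨z, hz, hzmax⟩ := hcpt.exists_isMaxOn hne hN.continuous.continuousOn
  refine ⟨N y, N z, hsph y hy, hsph z hz, fun x => ?_⟩
  rcases eq_or_ne x 0 with rfl | hx
  · simp [(hN.eq_zero_iff 0).2 rfl]
  have hx0 : 0 < ‖x‖ := norm_pos_iff.2 hx
  have hmem : ‖x‖⁻¹ • x ∈ Metric.sphere (0 : Fin d → ℝ) 1 := by
    simp [norm_smul, hx0.ne']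
  have e : N x = N (‖x‖⁻¹ • x) * ‖x‖ := by
    rw [hN.smul_eq, abs_of_pos (by positivity)]; field_simp
  rw [e]
  exact ⟨by gcongr; exact hymin hmem, by gcongr; exact hzmax hmem⟩

attribute [local instance] Matrix.linftyOpNormedRing Matrix.linftyOpNormedAlgebra

theorem IsNorm.exists_ratio_le (hd : 1 ≤ d) (hN : IsNorm d N) :
    ∃ K : ℝ, 0 < K ∧ ∀ (B : Matrix (Fin d) (Fin d) ℝ) (x : {x : Fin d → ℝ // x ≠ 0}),
      N (B.mulVec x.1) / N x.1 ≤ K * ‖B‖ := by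
  obtain ⟨c, K, hc, hK, h⟩ := hN.exists_bounds hd
  refine ⟨K / c, by positivity, fun B x => ?_⟩
  rw [div_le_iff₀ (hN.pos x.2)]
  calc N (B.mulVec x.1) ≤ K * ‖B.mulVec x.1‖ := (h _).2
    _ ≤ K * (‖B‖ * ‖x.1‖) := by gcongr; exact Matrix.linfty_opNorm_mulVec B x.1
    _ = K / c * ‖B‖ * (c * ‖x.1‖) := by field_simp
    _ ≤ K / c * ‖B‖ * N x.1 := by gcongr; exact (h _).1

theorem IsNorm.opNorm_nonneg (hN : IsNorm d N) (B : Matrix (Fin d) (Fin d) ℝ) :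
    0 ≤ opNorm N B :=
  Real.iSup_nonneg fun _ => div_nonneg (hN.nonneg _) (hN.nonneg _)

theorem IsNorm.exists_opNorm_le (hd : 1 ≤ d) (hN : IsNorm d N) :
    ∃ K : ℝ, 0 < K ∧ ∀ B : Matrix (Fin d) (Fin d) ℝ, opNorm N B ≤ K * ‖B‖ := by
  obtain ⟨K, hK, h⟩ := hN.exists_ratio_le hd
  exact ⟨K, hK, fun B => Real.iSup_le (h B) (by positivity)⟩

theorem IsNorm.le_opNorm (hd : 1 ≤ d) (hN : IsNorm d N) (B : Matrix (Fin d) (Fin d) ℝ)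
    (x : Fin d → ℝ) : N (B.mulVec x) ≤ opNorm N B * N x := by
  rcases eq_or_ne x 0 with rfl | hx
  · simp [(hN.eq_zero_iff 0).2 rfl]
  obtain ⟨K, hK, h⟩ := hN.exists_ratio_le hd
  rw [← div_le_iff₀ (hN.pos hx)]
  exact le_ciSup (f := fun x : {x : Fin d → ℝ // x ≠ 0} => N (B.mulVec x.1) / N x.1)
    ⟨K * ‖B‖, by rintro _ ⟨y, rfl⟩; exact h B y⟩ ⟨x, hx⟩

theorem IsNorm.pow_le_opNorm (hd : 1 ≤ d) (hN : IsNorm d N) (B : Matrix (Fin d) (Fin d) ℝ)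
    (x : Fin d → ℝ) (k : ℕ) : N ((B ^ k).mulVec x) ≤ opNorm N B ^ k * N x := by
  induction k with
  | zero => simp
  | succ k ih =>
    rw [pow_succ', ← Matrix.mulVec_mulVec, pow_succ', mul_assoc]
    refine (hN.le_opNorm hd B _).trans ?_
    have := hN.opNorm_nonneg B
    gcongr

/-- Complex eigenvalues are bounded by the induced norm of the real norm `N`. With `v` a complex
eigenvector and `P w = N (re w) + N (im w)`, one has `P (z • w) ≤ 2 * ‖z‖ * P w`, whence
`‖μ‖ ^ k ≤ 2 * opNorm N B ^ k` for all `k`; the factor `2` disappears as `k → ∞`. -/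
theorem IsNorm.norm_le_opNorm_of_mem_spectrum (hd : 1 ≤ d) (hN : IsNorm d N)
    (B : Matrix (Fin d) (Fin d) ℝ)
    (μ : ℂ) (hμ : μ ∈ spectrum ℂ (B.map (fun t => (t : ℂ)))) : ‖μ‖ ≤ opNorm N B := by
  set q := opNorm N B with hq
  have hq0 : 0 ≤ q := hN.opNorm_nonneg B
  rcases eq_or_ne μ 0 with rfl | hμ0
  · simpa using hq0
  rw [← Matrix.spectrum_toLin', ← Module.End.hasEigenvalue_iff_mem_spectrum] at hμ
  obtain ⟨v, hv⟩ := hμ.exists_hasEigenvector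
  have hv0 : v ≠ 0 := hv.2
  let P : (Fin d → ℂ) → ℝ := fun w => N (fun i => (w i).re) + N (fun i => (w i).im)
  have hP0 : 0 < P v := by
    by_contra hcon
    have h1 := hN.nonneg (fun i => (v i).re)
    have h2 := hN.nonneg (fun i => (v i).im)
    have h3 : N (fun i => (v i).re) = 0 := by simp only [P] at hcon; linarith
    have h4 : N (fun i => (v i).im) = 0 := by simp only [P] at hcon; linarith
    rw [hN.eq_zero_iff] at h3 h4
    exact hv0 (funext fun i => Complex.ext (congrFun h3 i) (congrFun h4 i))
  have hPs : ∀ (z : ℂ) w, P (z • w) ≤ 2 * ‖z‖ * P w := by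
    intro z w
    have h1 := hN.nonneg (fun i => (w i).re)
    have h2 := hN.nonneg (fun i => (w i).im)
    have e1 : N (fun i => ((z • w) i).re) ≤
        ‖z‖ * N (fun i => (w i).re) + ‖z‖ * N (fun i => (w i).im) := by
      have : (fun i => ((z • w) i).re) =
          z.re • (fun i => (w i).re) + (-z.im) • (fun i => (w i).im) := by
        funext i; simp; ring
      rw [this]
      refine (hN.add_le _ _).trans ?_
      rw [hN.smul_eq, hN.smul_eq, abs_neg]
      gcongr
      · exact Complex.abs_re_le_norm z
      · exact Complex.abs_im_le_norm z
    have e2 : N (fun i => ((z • w) i).im) ≤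
        ‖z‖ * N (fun i => (w i).re) + ‖z‖ * N (fun i => (w i).im) := by
      have : (fun i => ((z • w) i).im) =
          z.im • (fun i => (w i).re) + z.re • (fun i => (w i).im) := by
        funext i; simp; ring
      rw [this]
      refine (hN.add_le _ _).trans ?_
      rw [hN.smul_eq, hN.smul_eq]
      gcongr
      · exact Complex.abs_im_le_norm z
      · exact Complex.abs_re_le_norm z
    simp only [P] at *
    linarith
  have hpow : ∀ k : ℕ, ((B ^ k).map (fun t => (t : ℂ))).mulVec v = μ ^ k • v := by
    intro k
    have h1 : ((B ^ k).map (fun t => (t : ℂ))) = (B.map (fun t => (t : ℂ))) ^ k :=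
      map_pow (Complex.ofRealHom.mapMatrix) B k
    rw [h1, ← Matrix.toLin'_apply, Matrix.toLin'_pow]
    exact hv.pow_apply k
  have hPB : ∀ k : ℕ, P (((B ^ k).map (fun t => (t : ℂ))).mulVec v) ≤ q ^ k * P v := by
    intro k
    have e1 : (fun i => ((((B ^ k).map (fun t => (t : ℂ))).mulVec v) i).re) =
        (B ^ k).mulVec (fun i => (v i).re) := by
      funext i; simp [Matrix.mulVec, dotProduct]
    have e2 : (fun i => ((((B ^ k).map (fun t => (t : ℂ))).mulVec v) i).im) =
        (B ^ k).mulVec (fun i => (v i).im) := by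
      funext i; simp [Matrix.mulVec, dotProduct]
    simp only [P, e1, e2, mul_add]
    exact add_le_add (hN.pow_le_opNorm hd B _ k) (hN.pow_le_opNorm hd B _ k)
  have hall : ∀ k : ℕ, ‖μ‖ ^ k ≤ 2 * q ^ k := by
    intro k
    have h1 : P v ≤ 2 * ‖(μ ^ k)⁻¹‖ * (q ^ k * P v) := by
      calc P v = P ((μ ^ k)⁻¹ • (μ ^ k • v)) := by
            rw [smul_smul, inv_mul_cancel₀ (pow_ne_zero k hμ0), one_smul]
        _ ≤ 2 * ‖(μ ^ k)⁻¹‖ * P (μ ^ k • v) := hPs _ _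
        _ ≤ _ := by
            gcongr
            rw [← hpow]; exact hPB k
    have hμk : 0 < ‖μ‖ ^ k := pow_pos (norm_pos_iff.2 hμ0) k
    rw [norm_inv, norm_pow] at h1
    have h2 : 1 * P v ≤ (2 * q ^ k / ‖μ‖ ^ k) * P v := by
      calc 1 * P v = P v := one_mul _
        _ ≤ _ := h1
        _ = _ := by field_simp
    have h3 := le_of_mul_le_mul_right h2 hP0
    rwa [one_le_div hμk] at h3
  by_contra hlt
  push Not at hlt
  have hμpos : 0 < ‖μ‖ := norm_pos_iff.2 hμ0
  have ht : Tendsto (fun k : ℕ => (q / ‖μ‖) ^ k) atTop (𝓝 0) :=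
    tendsto_pow_atTop_nhds_zero_of_lt_one (by positivity) ((div_lt_one hμpos).2 hlt)
  obtain ⟨k, hk⟩ := (ht.eventually (gt_mem_nhds (show (0 : ℝ) < 1 / 2 by norm_num))).exists
  rw [div_pow, div_lt_iff₀ (by positivity)] at hk
  linarith [hall k]

theorem specRad_nonneg (B : Matrix (Fin d) (Fin d) ℝ) : 0 ≤ specRad B :=
  Real.sSup_nonneg (by rintro _ ⟨μ, -, rfl⟩; exact norm_nonneg μ)

theorem IsNorm.specRad_le_opNorm (hd : 1 ≤ d) (hN : IsNorm d N)
    (B : Matrix (Fin d) (Fin d) ℝ) : specRad B ≤ opNorm N B :=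
  Real.sSup_le (by rintro _ ⟨μ, hμ, rfl⟩; exact hN.norm_le_opNorm_of_mem_spectrum hd B μ hμ)
    (hN.opNorm_nonneg B)

theorem abs_trace_le (B : Matrix (Fin d) (Fin d) ℝ) : |B.trace| ≤ d * specRad B := by
  set B' : Matrix (Fin d) (Fin d) ℂ := B.map (fun t => (t : ℂ)) with hB'
  have h1 : ‖B'.trace‖ = |B.trace| := by
    have : B'.trace = (B.trace : ℂ) := by simp [hB', Matrix.trace]
    rw [this, Complex.norm_real, Real.norm_eq_abs]
  have hbdd : BddAbove ((fun μ => ‖μ‖) '' spectrum ℂ B') :=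
    ((Matrix.finite_spectrum B').image _).bddAbove
  rw [← h1, Matrix.trace_eq_sum_roots_charpoly]
  refine (norm_multiset_sum_le _).trans ?_
  have hcard : Multiset.card B'.charpoly.roots ≤ d := by
    refine (Polynomial.card_roots' _).trans ?_
    rw [Matrix.charpoly_natDegree_eq_dim, Fintype.card_fin]
  refine (Multiset.sum_le_card_nsmul _ (specRad B) ?_).trans ?_
  · intro x hx
    obtain ⟨μ, hμ, rfl⟩ := Multiset.mem_map.1 hx
    refine le_csSup hbdd ⟨μ, ?_, rfl⟩
    exact Matrix.mem_spectrum_iff_isRoot_charpoly.2 (Polynomial.isRoot_of_mem_roots hμ)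
  · rw [Multiset.card_map, nsmul_eq_mul]
    have := specRad_nonneg B
    gcongr

end Norms

/-! ### The joint spectral radius -/

section Main

variable {d m : ℕ}

attribute [local instance] Matrix.linftyOpNormedRing Matrix.linftyOpNormedAlgebra

theorem word_eq (A : Fin m → Matrix (Fin d) (Fin d) ℝ) (n : ℕ) (σ : Fin n → Fin m) :
    word A n σ = ((List.ofFn σ).reverse.map A).prod := by
  rw [word, List.map_reverse, List.map_ofFn]; rfl

theorem exists_word (A : Fin m → Matrix (Fin d) (Fin d) ℝ) (l : List (Fin m)) :
    ∃ σ : Fin l.length → Fin m, word A l.length σ = (l.map A).prod := by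
  refine ⟨fun i => l.reverse.get (i.cast (List.length_reverse).symm), ?_⟩
  rw [word_eq]
  congr 2
  rw [List.reverse_eq_iff]
  apply List.ext_get <;> simp

theorem eq_zero_of_isIdempotentElem_of_trace (e : Matrix (Fin d) (Fin d) ℝ)
    (he : IsIdempotentElem e) (ht : e.trace = 0) : e = 0 := by
  have h1 : IsIdempotentElem (Matrix.toLin' e) := by
    rw [IsIdempotentElem, Module.End.mul_eq_comp, ← Matrix.toLin'_mul, he.eq]
  have h2 : LinearMap.trace ℝ _ (Matrix.toLin' e) = 0 := by
    rw [Matrix.trace_toLin'_eq, ht]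
  exact Matrix.toLin'.map_eq_zero_iff.1 (LinearMap.IsIdempotentElem.eq_zero_of_trace_eq_zero h1 h2)

/-- If the traces of long words grow at most like `r ^ n`, then the norms of all words grow at most
like `r' ^ n`, for any `r' > r`. The algebra results are applied to the unital subalgebra generated
by the family, which the words span. -/
theorem exists_growth_of_trace_le (A : Fin m → Matrix (Fin d) (Fin d) ℝ)
    (r D : ℝ) (hr : 0 < r) (hD : 0 ≤ D) (N₀ : ℕ)
    (h : ∀ l : List (Fin m), N₀ ≤ l.length → |(l.map A).prod.trace| ≤ D * r ^ l.length)
    (r' : ℝ) (hr' : r < r') :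
    ∃ C : ℝ, 0 ≤ C ∧ ∀ l : List (Fin m), ‖(l.map A).prod‖ ≤ C * r' ^ l.length := by
  let 𝓐 : Subalgebra ℝ (Matrix (Fin d) (Fin d) ℝ) := Algebra.adjoin ℝ (Set.range A)
  let a : Fin m → 𝓐 := fun i => ⟨A i, Algebra.subset_adjoin ⟨i, rfl⟩⟩
  have ha : ∀ l : List (Fin m), ((l.map a).prod : Matrix (Fin d) (Fin d) ℝ) = (l.map A).prod := by
    intro l
    rw [← Subalgebra.coe_val, map_list_prod, List.map_map]; rfl
  let τ : 𝓐 →ₗ[ℝ] ℝ := Matrix.traceLinearMap (Fin d) ℝ ℝ ∘ₗ 𝓐.val.toLinearMap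
  have hτ : ∀ x : 𝓐, τ x = (x : Matrix (Fin d) (Fin d) ℝ).trace := fun x => rfl
  have hspan : Submodule.span ℝ (Set.range fun l : List (Fin m) => (l.map a).prod) = ⊤ := by
    have hinj : Function.Injective 𝓐.val.toLinearMap := Subtype.val_injective
    apply Submodule.map_injective_of_injective hinj
    rw [Submodule.map_span, Submodule.map_top]
    have e1 : 𝓐.val.toLinearMap.range = Subalgebra.toSubmodule 𝓐 := by
      ext x; simp
    rw [e1, Algebra.adjoin_eq_span]
    congr 1
    ext x
    constructor
    · rintro ⟨_, ⟨l, rfl⟩, rfl⟩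
      change ((l.map a).prod : Matrix (Fin d) (Fin d) ℝ) ∈ Submonoid.closure (Set.range A)
      rw [ha]
      refine Submonoid.list_prod_mem _ fun y hy => ?_
      obtain ⟨i, -, rfl⟩ := List.mem_map.1 hy
      exact Submonoid.subset_closure ⟨i, rfl⟩
    · intro hx
      obtain ⟨L, hL, rfl⟩ := Submonoid.exists_list_of_mem_closure hx
      obtain ⟨l, rfl⟩ : ∃ l : List (Fin m), l.map A = L := by
        rw [← Set.mem_range, Set.range_list_map]
        exact hL
      exact ⟨_, ⟨l, rfl⟩, ha l⟩
  obtain ⟨C, -, hC⟩ := exists_section a hspan τ (fun x y => Matrix.trace_mul_comm x.1 y.1)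
    (fun e he h0 => Subtype.ext
      (eq_zero_of_isIdempotentElem_of_trace _ (congrArg Subtype.val he.eq) h0))
    r D hr hD N₀ (fun l hl => by rw [hτ, ha]; exact h l hl)
  obtain ⟨C', hC', hg⟩ := growth a r C hr N₀ hC r' hr'
  exact ⟨C', hC', fun l => by rw [← ha]; exact hg l⟩

theorem jsr_le (hd : 1 ≤ d) {N : (Fin d → ℝ) → ℝ} (hN : IsNorm d N)
    (A : Fin m → Matrix (Fin d) (Fin d) ℝ) (C r r' : ℝ) (hr : 0 < r) (hr' : r < r')
    (h : ∀ l : List (Fin m), ‖(l.map A).prod‖ ≤ C * r ^ l.length) : jsr N A ≤ r' := by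
  have hr'0 : 0 < r' := hr.trans hr'
  obtain ⟨K, hK, hKN⟩ := hN.exists_opNorm_le hd
  have ht : Tendsto (fun n : ℕ => (K * C) * (r / r') ^ n) atTop (𝓝 ((K * C) * 0)) :=
    (tendsto_pow_atTop_nhds_zero_of_lt_one (by positivity) ((div_lt_one hr'0).2 hr')).const_mul _
  rw [mul_zero] at ht
  refine limsup_le_of_le ?_ ?_
  · refine IsCoboundedUnder.of_frequently_ge (a := 0) (Frequently.of_forall fun n => ?_)
    exact Real.iSup_nonneg fun σ => Real.rpow_nonneg (hN.opNorm_nonneg _) _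
  · filter_upwards [ht.eventually (ge_mem_nhds zero_lt_one), eventually_ge_atTop 1] with n hn hn1
    refine Real.iSup_le (fun σ => ?_) hr'0.le
    have hl := h (List.ofFn σ).reverse
    rw [← word_eq, List.length_reverse, List.length_ofFn] at hl
    rw [div_pow, ← mul_div_assoc, div_le_one (by positivity)] at hn
    have h1 : opNorm N (word A n σ) ≤ r' ^ n :=
      calc opNorm N (word A n σ) ≤ K * ‖word A n σ‖ := hKN _
        _ ≤ K * (C * r ^ n) := by gcongr
        _ = K * C * r ^ n := by ring
        _ ≤ r' ^ n := hn
    calc opNorm N (word A n σ) ^ ((n : ℝ)⁻¹) ≤ (r' ^ n) ^ ((n : ℝ)⁻¹) :=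
          Real.rpow_le_rpow (hN.opNorm_nonneg _) h1 (by positivity)
      _ = r' := Real.pow_rpow_inv_natCast hr'0.le (by omega)

end Main

/-- For every `ε > 0` there are arbitrarily large `n` and words `σ` with
`ρ(A_σ) ≥ (ρ(𝒜) − ε)^n`; consequently, in any norm,
`‖A_σ‖ ≥ (ρ(𝒜) − ε)^n` for those `n` and `σ`. -/
theorem stmt5 (d m : ℕ) (hd : 1 ≤ d) (hm : 1 ≤ m)
    (N : (Fin d → ℝ) → ℝ) (hN : IsNorm d N)
    (A : Fin m → Matrix (Fin d) (Fin d) ℝ)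
    (ε : ℝ) (hε : 0 < ε) (N₀ : ℕ) :
    ∃ n : ℕ, N₀ ≤ n ∧ ∃ σ : Fin n → Fin m,
      (jsr N A - ε) ^ n ≤ specRad (word A n σ) ∧
      ∀ N' : (Fin d → ℝ) → ℝ, IsNorm d N' →
        (jsr N A - ε) ^ n ≤ opNorm N' (word A n σ) := by
  suffices hs : ∃ n : ℕ, N₀ ≤ n ∧ ∃ σ : Fin n → Fin m,
      (jsr N A - ε) ^ n ≤ specRad (word A n σ) by
    obtain ⟨n, hn, σ, hσ⟩ := hs
    exact ⟨n, hn, σ, hσ, fun N' hN' => hσ.trans (hN'.specRad_le_opNorm hd _)⟩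
  rcases le_or_gt (jsr N A - ε) 0 with hr | hr
  -- An odd power of a nonpositive number is nonpositive, so any word of odd length will do.
  · refine ⟨2 * N₀ + 1, by omega, fun _ => ⟨0, hm⟩, ?_⟩
    exact (Odd.pow_nonpos ⟨N₀, rfl⟩ hr).trans (specRad_nonneg _)
  · by_contra! hcon
    obtain ⟨C, -, hg⟩ := exists_growth_of_trace_le A (jsr N A - ε) d hr (by positivity) N₀
      (fun l hl => by
        obtain ⟨σ, hσ⟩ := exists_word A l
        rw [← hσ]
        refine (abs_trace_le _).trans ?_
        have := (hcon l.length hl σ).le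
        gcongr)
      (jsr N A - ε / 2) (by linarith)
    have := jsr_le hd hN A C (jsr N A - ε / 2) (jsr N A - ε / 4) (by linarith) (by linarith) hg
    linarith
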